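/- There exists an absolute constant c > 0 such that the following holds. Let n, d be positive integers, let r > 0 and ε ∈ (0,1), let k_1, …, k_n ∈ ℝ^d satisfy ‖k_i‖₂ ≤ r for all i, let v_1, …, v_n ∈ ℝ^d, and let T = ⌈log₂ n⌉. Then there exists a (finitely supported) probability distribution over pairs of tuples ((K^0, …, K^T), (V^0, …, V^T)) of subsets of {1,…,n} with total size ∑_{l=0}^T (|K^l| + |V^l|) ≤ c · √d · exp(2r²/√d) · ε^{−1} · (log(2+n))^4, such that for every q ∈ ℝ^d with ‖q‖₂ ≤ r, with probability at least 1 − 1/n² over the choice of the tuples, the estimator z = ( ∑_{l=0}^T 2^l ∑_{i ∈ V^l} exp(⟨k_i, q⟩/√d) v_i ) / ( ∑_{l=0}^T 2^l ∑_{i ∈ K^l} exp(⟨k_i, q⟩/√d) ) satisfies ‖ z − Attn(q, K, V) ‖₂ ≤ ε · ‖softmax(K·q/√d)‖₂ · ‖V‖_F, where K ∈ ℝ^{n×d} has rows k_1, …, k_n, V ∈ ℝ^{n×d} has rows v_1, …, v_n, softmax(K·q/√d) is the vector with entries exp(⟨k_i,q⟩/√d)/∑_{j=1}^n exp(⟨k_j,q⟩/√d),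 Attn(q, K, V) = softmax(K·q/√d)^T · V = ∑_{i=1}^n softmax(K·q/√d)_i · v_i, and ‖V‖_F = (∑_{i=1}^n ‖v_i‖₂²)^{1/2}. -/

import Mathlib

open RealInnerProductSpace
open scoped ENNReal

/-- Coordinates, indexed by words in `Fin d`, of a feature map for the kernel `exp ⟪a, b⟫`. -/
noncomputable def expFeature {d : ℕ} (a : EuclideanSpace ℝ (Fin d))
    (w : Σ m : ℕ, Fin m → Fin d) : ℝ :=
  (Real.sqrt (w.1.factorial))⁻¹ * ∏ t, a (w.2 t)

theorem sum_expFeature_mul {d : ℕ} (a b : EuclideanSpace ℝ (Fin d)) (m : ℕ) :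
    ∑ f : Fin m → Fin d, expFeature a ⟨m, f⟩ * expFeature b ⟨m, f⟩ = ⟪a, b⟫ ^ m / m.factorial := by
  have h : ⟪a, b⟫ = ∑ i, a i * b i := by
    simp [PiLp.inner_apply, mul_comm]
  have hs : (Real.sqrt (m.factorial))⁻¹ * (Real.sqrt (m.factorial))⁻¹ = (m.factorial : ℝ)⁻¹ := by
    rw [← mul_inv, Real.mul_self_sqrt (by positivity)]
  have hp : (∑ i, a i * b i) ^ m = ∑ f : Fin m → Fin d, ∏ t, (a (f t) * b (f t)) := by
    simpa using (Finset.prod_univ_sum (fun _ : Fin m => (Finset.univ : Finset (Fin d)))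
      (fun _ i => a i * b i))
  rw [h, hp, div_eq_mul_inv, ← hs, Finset.sum_mul]
  refine Finset.sum_congr rfl fun f _ => ?_
  simp only [expFeature, Finset.prod_mul_distrib]
  ring

theorem memℓp_expFeature {d : ℕ} (a : EuclideanSpace ℝ (Fin d)) : Memℓp (expFeature a) 2 := by
  rw [memℓp_gen_iff (by norm_num)]
  have h0 : ∀ w, ‖expFeature a w‖ ^ (2 : ENNReal).toReal = expFeature a w * expFeature a w := by
    intro w
    simp [sq]
  simp_rw [h0]
  rw [summable_sigma_of_nonneg (fun w => mul_self_nonneg _)]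
  refine ⟨fun m => Summable.of_finite, ?_⟩
  simp_rw [tsum_fintype, sum_expFeature_mul]
  exact Real.summable_pow_div_factorial _

/-- The exponential kernel is the Gram kernel of a family of vectors in a Hilbert space. -/
theorem exists_expKernel_features (d : ℕ) (s : ℝ) (hs : 0 ≤ s) :
    ∃ φ : EuclideanSpace ℝ (Fin d) → lp (fun _ : Σ m : ℕ, Fin m → Fin d => ℝ) 2,
      ∀ a b, ⟪φ a, φ b⟫ = Real.exp (⟪a, b⟫ / s) := by
  refine ⟨fun a => ⟨expFeature ((Real.sqrt s)⁻¹ • a), memℓp_expFeature _⟩, fun a b => ?_⟩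
  have hsum := lp.summable_inner (𝕜 := ℝ)
    (⟨_, memℓp_expFeature ((Real.sqrt s)⁻¹ • a)⟩ : lp (fun _ : Σ m : ℕ, Fin m → Fin d => ℝ) 2)
    ⟨_, memℓp_expFeature ((Real.sqrt s)⁻¹ • b)⟩
  rw [lp.inner_eq_tsum, hsum.tsum_sigma' (fun m => Summable.of_finite)]
  have hin : ⟪a, b⟫ / s = ⟪(Real.sqrt s)⁻¹ • a, (Real.sqrt s)⁻¹ • b⟫ := by
    rw [real_inner_smul_left, real_inner_smul_right, ← mul_assoc, ← mul_inv,
      Real.mul_self_sqrt hs, div_eq_inv_mul]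
  rw [hin, Real.exp_eq_exp_ℝ, NormedSpace.exp_eq_tsum_div]
  refine tsum_congr fun m => ?_
  rw [tsum_fintype, ← sum_expFeature_mul]
  refine Finset.sum_congr rfl fun f _ => ?_
  simp [mul_comm]

open MeasureTheory ProbabilityTheory in
/-- Hoeffding's lemma for a biased sign with mean `m`. -/
theorem cosh_add_mul_sinh_le (m t : ℝ) (hm : |m| ≤ 1) :
    (1 + m) / 2 * Real.exp t + (1 - m) / 2 * Real.exp (-t) ≤ Real.exp (m * t + t ^ 2 / 2) := by
  obtain ⟨h1, h2⟩ := abs_le.1 hm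
  let μ : Measure ℝ := ENNReal.ofReal ((1 + m) / 2) • Measure.dirac 1
    + ENNReal.ofReal ((1 - m) / 2) • Measure.dirac (-1)
  have hμ : IsProbabilityMeasure μ := ⟨by
    simp only [μ, Measure.coe_add, Measure.coe_smul, Pi.add_apply, Pi.smul_apply, measure_univ,
      smul_eq_mul, mul_one]
    rw [← ENNReal.ofReal_add (by linarith) (by linarith)]
    simp only [ENNReal.ofReal_eq_one]; ring⟩
  have hintegral : ∀ f : ℝ → ℝ, ∫ x, f x ∂μ = (1 + m) / 2 * f 1 + (1 - m) / 2 * f (-1) := by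
    intro f
    rw [integral_add_measure, integral_smul_measure, integral_smul_measure, integral_dirac,
      integral_dirac, ENNReal.toReal_ofReal (by linarith), ENNReal.toReal_ofReal (by linarith)]
    · simp
    · exact (integrable_dirac (by simp)).smul_measure (by simp)
    · exact (integrable_dirac (by simp)).smul_measure (by simp)
  have hb : ∀ᵐ x ∂μ, (id x : ℝ) ∈ Set.Icc (-1 : ℝ) 1 := by
    simp [μ, ae_add_measure_iff, Measure.ae_smul_measure, ae_dirac_eq]
  have h := (hasSubgaussianMGF_of_mem_Icc (X := id) aemeasurable_id hb).mgf_le t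
  simp only [mgf, hintegral, id] at h
  norm_num at h
  have e1 : (1 + m) / 2 - (1 - m) / 2 = m := by ring
  rw [← sub_eq_add_neg, e1] at h
  have e2 := mul_le_mul_of_nonneg_left h (Real.exp_pos (m * t)).le
  rw [mul_add, ← Real.exp_add] at e2
  calc _ = _ := ?_
    _ ≤ _ := e2
    _ = _ := by ring_nf
  have e3 : Real.exp t = Real.exp (m * t) * Real.exp (t * (1 - m)) := by
    rw [← Real.exp_add]; ring_nf
  have e4 : Real.exp (-t) = Real.exp (m * t) * Real.exp (t * (-1 - m)) := by
    rw [← Real.exp_add]; ring_nf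
  rw [e3, e4]; ring_nf

/-- The signed sum `∑_{i ∈ B} x i - ∑_{i ∈ A \ B} x i`, for `B ⊆ A`. -/
def signedSum {ι E : Type*} [AddCommGroup E] (x : ι → E) (A B : Finset ι) : E :=
  2 • ∑ i ∈ B, x i - ∑ i ∈ A, x i

/-- The self-balancing walk, stopped when a step would be too biased: each step keeps the signed sum
sub-Gaussian with variance proxy `c`. -/
theorem exists_selfBalancing_weights {ι E : Type*} [DecidableEq ι] [NormedAddCommGroup E]
    [InnerProductSpace ℝ E] (x : ι → E) (hx : ∀ i, ‖x i‖ ≤ 1) (c : ℝ) (hc : 1 ≤ c) (A : Finset ι) :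
    ∃ p : Finset ι → ℝ, (∀ B, 0 ≤ p B) ∧ ∑ B ∈ A.powerset, p B ≤ 1 ∧
      1 - 2 * A.card * Real.exp (-c / 2) ≤ ∑ B ∈ A.powerset, p B ∧
      ∀ u, ∑ B ∈ A.powerset, p B * Real.exp ⟪signedSum x A B, u⟫ ≤ Real.exp (c * ‖u‖ ^ 2 / 2) := by
  classical
  have hc0 : 0 < c := by linarith
  induction A using Finset.induction_on with
  | empty =>
    refine ⟨fun _ => 1, fun _ => zero_le_one, by simp, by simp, fun u => ?_⟩
    simp only [Finset.powerset_empty, Finset.sum_singleton, signedSum, Finset.sum_empty, smul_zero,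
      sub_zero, inner_zero_left, Real.exp_zero, one_mul]
    exact Real.one_le_exp (by positivity)
  | insert a A ha ih =>
    obtain ⟨p, hp0, hp1, hpA, hpu⟩ := ih
    set w := signedSum x A with hw
    let m : Finset ι → ℝ := fun B => -⟪w B, x a⟫ / c
    let g : Finset ι → ℝ := fun B => if |⟪w B, x a⟫| ≤ c then p B else 0
    have hg0 : ∀ B, 0 ≤ g B := fun B => by
      simp only [g]; split_ifs; exacts [hp0 B, le_rfl]
    have hgp : ∀ B, g B ≤ p B := fun B => by
      simp only [g]; split_ifs; exacts [le_rfl, hp0 B]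
    have hgm : ∀ B, g B = 0 ∨ |m B| ≤ 1 := fun B => by
      by_cases h : |⟪w B, x a⟫| ≤ c
      · right
        simp only [m, abs_div, abs_neg, abs_of_pos hc0]
        exact (div_le_one hc0).2 h
      · left; simp [g, h]
    let p' : Finset ι → ℝ := fun B =>
      g (B.erase a) * ((1 + (if a ∈ B then m (B.erase a) else -m (B.erase a))) / 2)
    have hout : ∀ B ∈ A.powerset, a ∉ B := fun B hB h => ha (Finset.mem_powerset.1 hB h)
    have hsplit : ∀ f : Finset ι → ℝ, ∑ B ∈ (insert a A).powerset, p' B * f B =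
        ∑ B ∈ A.powerset, g B * ((1 + m B) / 2 * f (insert a B) + (1 - m B) / 2 * f B) := by
      intro f
      rw [Finset.sum_powerset_insert ha, ← Finset.sum_add_distrib]
      refine Finset.sum_congr rfl fun B hB => ?_
      have := hout B hB
      simp only [p', this, Finset.erase_eq_of_notMem, not_false_eq_true, if_false,
        Finset.erase_insert, Finset.mem_insert_self, if_true]
      ring
    have hsum : ∑ B ∈ (insert a A).powerset, p' B = ∑ B ∈ A.powerset, g B := by
      have := hsplit (fun _ => 1)
      simp only [mul_one] at this
      rw [this]
      refine Finset.sum_congr rfl fun B _ => by ring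
    refine ⟨p', fun B => ?_, ?_, ?_, fun u => ?_⟩
    · rcases hgm (B.erase a) with h | h
      · simp [p', h]
      · obtain ⟨h1, h2⟩ := abs_le.1 h
        refine mul_nonneg (hg0 _) ?_
        split_ifs <;> linarith
    · rw [hsum]
      exact (Finset.sum_le_sum fun B _ => hgp B).trans hp1
    · rw [hsum, Finset.card_insert_of_notMem ha]
      have hloss : ∀ B, p B - g B ≤ Real.exp (-c) *
          (p B * Real.exp ⟪w B, x a⟫ + p B * Real.exp ⟪w B, -x a⟫) := by
        intro B
        have hrw : Real.exp (-c) * (p B * Real.exp ⟪w B, x a⟫ + p B * Real.exp ⟪w B, -x a⟫) =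
            p B * (Real.exp (⟪w B, x a⟫ - c) + Real.exp (-⟪w B, x a⟫ - c)) := by
          simp only [inner_neg_right, sub_eq_add_neg, Real.exp_add]; ring
        rw [hrw]
        by_cases h : |⟪w B, x a⟫| ≤ c
        · simp only [g, h, if_true, sub_self]
          exact mul_nonneg (hp0 B) (by positivity)
        · simp only [g, h, if_false, sub_zero]
          refine le_mul_of_one_le_right (hp0 B) ?_
          rcases lt_abs.1 (not_le.1 h) with h | h
          · linarith [Real.one_le_exp (sub_nonneg.2 h.le), Real.exp_pos (-⟪w B, x a⟫ - c)]
          · linarith [Real.one_le_exp (sub_nonneg.2 h.le), Real.exp_pos (⟪w B, x a⟫ - c)]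
      have htail : ∀ u : E, ‖u‖ ≤ 1 →
          ∑ B ∈ A.powerset, p B * Real.exp ⟪w B, u⟫ ≤ Real.exp (c / 2) := by
        intro u hu
        refine (hpu u).trans (Real.exp_le_exp.2 ?_)
        nlinarith [norm_nonneg u, mul_le_mul hu hu (norm_nonneg u) zero_le_one]
      have h := Finset.sum_le_sum fun B (_ : B ∈ A.powerset) => hloss B
      rw [Finset.sum_sub_distrib, ← Finset.mul_sum, Finset.sum_add_distrib] at h
      have h1 := htail (x a) (hx a)
      have h2 := htail (-x a) (by simpa using hx a)
      have h3 := mul_le_mul_of_nonneg_left (add_le_add h1 h2) (Real.exp_pos (-c)).le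
      have h4 : Real.exp (-c) * (Real.exp (c / 2) + Real.exp (c / 2)) = 2 * Real.exp (-c / 2) := by
        rw [← two_mul, mul_left_comm, ← Real.exp_add]; ring_nf
      push_cast
      linarith
    · rw [hsplit]
      set t := ⟪x a, u⟫ with ht
      have hstep : ∀ B ∈ A.powerset,
          g B * ((1 + m B) / 2 * Real.exp ⟪signedSum x (insert a A) (insert a B), u⟫ +
            (1 - m B) / 2 * Real.exp ⟪signedSum x (insert a A) B, u⟫) ≤
          p B * Real.exp ⟪w B, u - (t / c) • x a⟫ * Real.exp (t ^ 2 / 2) := by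
        intro B hB
        have e1 : signedSum x (insert a A) (insert a B) = w B + x a := by
          simp only [hw, signedSum, Finset.sum_insert ha, Finset.sum_insert (hout B hB)]
          abel
        have e2 : signedSum x (insert a A) B = w B - x a := by
          simp only [hw, signedSum, Finset.sum_insert ha]
          abel
        rw [e1, e2, inner_add_left, inner_sub_left, ← ht, sub_eq_add_neg ⟪w B, u⟫, Real.exp_add,
          Real.exp_add]
        have e3 : ⟪w B, u - (t / c) • x a⟫ = ⟪w B, u⟫ + m B * t := by
          rw [inner_sub_right, real_inner_smul_right]
          simp only [m]; ring
        rcases hgm B with h | h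
        · rw [h, zero_mul]
          exact mul_nonneg (mul_nonneg (hp0 B) (Real.exp_pos _).le) (Real.exp_pos _).le
        · have h5 := cosh_add_mul_sinh_le (m B) t h
          calc _ = g B * (Real.exp ⟪w B, u⟫ *
                ((1 + m B) / 2 * Real.exp t + (1 - m B) / 2 * Real.exp (-t))) := by ring
            _ ≤ p B * (Real.exp ⟪w B, u⟫ * Real.exp (m B * t + t ^ 2 / 2)) := by
                have hpos : 0 ≤ (1 + m B) / 2 * Real.exp t + (1 - m B) / 2 * Real.exp (-t) := by
                  obtain ⟨h1, h2⟩ := abs_le.1 h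
                  have := Real.exp_pos t
                  have := Real.exp_pos (-t)
                  exact add_nonneg (mul_nonneg (by linarith) (by linarith))
                    (mul_nonneg (by linarith) (by linarith))
                exact mul_le_mul (hgp B) (mul_le_mul_of_nonneg_left h5 (Real.exp_pos _).le)
                  (mul_nonneg (Real.exp_pos _).le hpos) (hp0 B)
            _ = _ := by rw [e3, Real.exp_add, Real.exp_add]; ring
      refine (Finset.sum_le_sum hstep).trans ?_
      rw [← Finset.sum_mul]
      refine (mul_le_mul_of_nonneg_right (hpu _) (Real.exp_pos _).le).trans ?_
      rw [← Real.exp_add]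
      refine Real.exp_le_exp.2 ?_
      have hn : ‖u - (t / c) • x a‖ ^ 2 = ‖u‖ ^ 2 - 2 * t ^ 2 / c + t ^ 2 / c ^ 2 * ‖x a‖ ^ 2 := by
        rw [norm_sub_sq_real, real_inner_smul_right, real_inner_comm, norm_smul, mul_pow,
          Real.norm_eq_abs, sq_abs, ← ht]
        ring
      have hxa : ‖x a‖ ^ 2 ≤ 1 := by
        have := hx a
        have := norm_nonneg (x a)
        nlinarith
      have h6 : c * ‖u - (t / c) • x a‖ ^ 2 = c * ‖u‖ ^ 2 - 2 * t ^ 2 + t ^ 2 / c * ‖x a‖ ^ 2 := by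
        rw [hn]; field_simp
      have h7 : t ^ 2 / c * ‖x a‖ ^ 2 ≤ t ^ 2 := by
        have : t ^ 2 / c ≤ t ^ 2 := div_le_self (sq_nonneg t) hc
        have h0 : 0 ≤ t ^ 2 / c := by positivity
        nlinarith
      linarith

/-- Some distribution on `α` is supported on `P` and, for each query `q`, violates `good q` with
probability at most `δ`. -/
def RandomlyGood {α Q : Type*} (P : α → Prop) (good : Q → α → Prop) (δ : ℝ≥0∞) : Prop :=
  ∃ μ : PMF α, (∀ a ∈ μ.support, P a) ∧ ∀ q, μ.toOuterMeasure {a | ¬ good q a} ≤ δ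

namespace RandomlyGood

variable {α β γ Q Q' : Type*} {P : α → Prop} {good : Q → α → Prop} {δ : ℝ≥0∞}

theorem pure {a : α} (ha : P a) (hg : ∀ q, good q a) : RandomlyGood P good δ := by
  refine ⟨PMF.pure a, by simpa using ha, fun q => ?_⟩
  rw [PMF.toOuterMeasure_pure_apply]
  simp [hg q]

theorem bind {P' : α → β → Prop} {good' : Q → α → β → Prop} {δ' : ℝ≥0∞}
    {R : γ → Prop} {goal : Q → γ → Prop} (f : α → β → γ)
    (h : RandomlyGood P good δ) (h' : ∀ a, P a → RandomlyGood (P' a) (fun q => good' q a) δ')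
    (hR : ∀ a b, P a → P' a b → R (f a b))
    (hgoal : ∀ q a b, P a → P' a b → good q a → good' q a b → goal q (f a b)) :
    RandomlyGood R goal (δ + δ') := by
  classical
  obtain ⟨μ, hμ, hδ⟩ := h
  have hex : ∀ a, ∃ ν : PMF β, P a → (∀ b ∈ ν.support, P' a b) ∧
      ∀ q, ν.toOuterMeasure {b | ¬ good' q a b} ≤ δ' := by
    intro a
    by_cases ha : P a
    · obtain ⟨ν, h⟩ := h' a ha
      exact ⟨ν, fun _ => h⟩
    · obtain ⟨a', ha'⟩ := μ.support_nonempty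
      obtain ⟨ν, -⟩ := h' a' (hμ a' ha')
      exact ⟨ν, fun h => absurd h ha⟩
  choose ν hν using hex
  refine ⟨μ.bind fun a => (ν a).map (f a), fun c hc => ?_, fun q => ?_⟩
  · obtain ⟨a, ha, hc⟩ := (PMF.mem_support_bind_iff _ _ _).1 hc
    obtain ⟨b, hb, rfl⟩ := (PMF.mem_support_map_iff _ _ _).1 hc
    exact hR a b (hμ a ha) ((hν a (hμ a ha)).1 b hb)
  · rw [PMF.toOuterMeasure_bind_apply]
    calc ∑' a, μ a * ((ν a).map (f a)).toOuterMeasure {c | ¬ goal q c}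
        ≤ ∑' a, ({a | ¬ good q a}.indicator μ a + μ a * δ') := by
          refine ENNReal.tsum_le_tsum fun a => ?_
          by_cases hs : a ∈ μ.support
          · by_cases hg : good q a
            · refine (mul_le_mul_right ?_ (μ a)).trans le_add_self
              rw [PMF.toOuterMeasure_map_apply]
              refine ((ν a).toOuterMeasure_mono ?_).trans ((hν a (hμ a hs)).2 q)
              rintro b ⟨hb, hbs⟩ hgb
              exact hb (hgoal q a b (hμ a hs) ((hν a (hμ a hs)).1 b hbs) hg hgb)
            · rw [Set.indicator_of_mem (show a ∈ {a | ¬ good q a} from hg)]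
              refine le_trans ?_ le_self_add
              refine mul_le_of_le_one_right' ?_
              rw [← ((PMF.toOuterMeasure_apply_eq_one_iff _ Set.univ).2 (Set.subset_univ _) :
                ((ν a).map (f a)).toOuterMeasure Set.univ = 1)]
              exact MeasureTheory.measure_mono (Set.subset_univ _)
          · rw [PMF.mem_support_iff, not_not] at hs
            simp [hs]
      _ = μ.toOuterMeasure {a | ¬ good q a} + δ' := by
          rw [ENNReal.tsum_add, ENNReal.tsum_mul_right, μ.tsum_coe, one_mul,
            PMF.toOuterMeasure_apply]
      _ ≤ δ + δ' := add_le_add_left (hδ q) _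

theorem mono {R : α → Prop} {goal : Q' → α → Prop} {δ' : ℝ≥0∞} (h : RandomlyGood P good δ)
    (hR : ∀ a, P a → R a) (e : Q' → Q) (hg : ∀ q a, P a → good (e q) a → goal q a) (hδ : δ ≤ δ') :
    RandomlyGood R goal δ' := by
  obtain ⟨μ, hμ, hδμ⟩ := h
  refine ⟨μ, fun a ha => hR a (hμ a ha), fun q => (μ.toOuterMeasure_mono ?_).trans
    ((hδμ (e q)).trans hδ)⟩
  rintro a ⟨ha, hs⟩ hc
  exact ha (hg q a (hμ a hs) hc)

theorem of_le {δ' : ℝ≥0∞} (h : RandomlyGood P good δ) (hδ : δ ≤ δ') :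
    RandomlyGood P good δ' :=
  h.mono (fun _ hP => hP) id (fun _ _ _ hg => hg) hδ

theorem map {R : β → Prop} {goal : Q → β → Prop} (f : α → β) (h : RandomlyGood P good δ)
    (hR : ∀ a, P a → R (f a)) (hg : ∀ q a, P a → good q a → goal q (f a)) :
    RandomlyGood R goal δ := by
  obtain ⟨μ, hμ, hδμ⟩ := h
  refine ⟨μ.map f, fun b hb => ?_, fun q => ?_⟩
  · obtain ⟨a, ha, rfl⟩ := (PMF.mem_support_map_iff _ _ _).1 hb
    exact hR a (hμ a ha)
  · rw [PMF.toOuterMeasure_map_apply]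
    refine (μ.toOuterMeasure_mono ?_).trans (hδμ q)
    rintro a ⟨ha, hs⟩ hc
    exact ha (hg q a (hμ a hs) hc)

theorem forall_fintype {J : Type*} [Fintype J] {good : Q × J → α → Prop}
    (h : RandomlyGood P good δ) :
    RandomlyGood P (fun q a => ∀ j, good (q, j) a) (Fintype.card J * δ) := by
  obtain ⟨μ, hμ, hδμ⟩ := h
  refine ⟨μ, hμ, fun q => ?_⟩
  have : {a | ¬ ∀ j, good (q, j) a} = ⋃ j, {a | ¬ good (q, j) a} := by
    ext a; simp
  rw [this]
  refine (MeasureTheory.measure_iUnion_fintype_le _ _).trans ?_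
  refine (Finset.sum_le_sum fun j _ => hδμ (q, j)).trans ?_
  simp

/-- Independent choices over a finite index set. -/
theorem pi {ι : Type*} [Fintype ι] [Inhabited α] {P : ι → α → Prop} {good : Q → ι → α → Prop}
    (h : ∀ i, RandomlyGood (P i) (fun q => good q i) δ) :
    RandomlyGood (fun f : ι → α => ∀ i, P i (f i)) (fun q f => ∀ i, good q i (f i))
      (Fintype.card ι * δ) := by
  classical
  suffices H : ∀ s : Finset ι, RandomlyGood (fun f : ι → α => ∀ i ∈ s, P i (f i))
      (fun q f => ∀ i ∈ s, good q i (f i)) (s.card * δ) by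
    simpa using H Finset.univ
  intro s
  induction s using Finset.induction_on with
  | empty => exact pure (a := fun _ => default) (by simp) (by simp)
  | insert a s ha ih =>
    rw [Finset.card_insert_of_notMem ha, Nat.cast_add, Nat.cast_one, add_mul, one_mul]
    refine bind (fun f b => Function.update f a b) ih (fun _ _ => h a) ?_ ?_
    · intro f b hf hb i hi
      by_cases hia : i = a
      · subst hia; simpa using hb
      · simpa [hia] using hf i (Finset.mem_of_mem_insert_of_ne hi hia)
    · intro q f b _ _ hf hb i hi
      by_cases hia : i = a
      · subst hia; simpa using hb
      · simpa [hia] using hf i (Finset.mem_of_mem_insert_of_ne hi hia)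

/-- A sub-probability weight on a finset, completed by putting the missing mass on `a₀`. -/
theorem of_weights {S : Finset α} {a₀ : α} {δ : ℝ} (p : α → ℝ)
    (hp : ∀ a, 0 ≤ p a) (hsum : ∑ a ∈ S, p a ≤ 1) (hP : ∀ a ∈ S, P a) (ha₀ : P a₀)
    (hδ : ∀ q, ∀ S' ⊆ S, (∀ a ∈ S', ¬ good q a) → ∑ a ∈ S', p a + (1 - ∑ a ∈ S, p a) ≤ δ) :
    RandomlyGood P good (ENNReal.ofReal δ) := by
  classical
  set s := ∑ a ∈ S, p a with hs
  let w : α → ℝ≥0∞ := fun a =>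
    (S : Set α).indicator (fun a => ENNReal.ofReal (p a)) a +
      if a = a₀ then ENNReal.ofReal (1 - s) else 0
  have hS : ∀ S' : Finset α, ∑ a ∈ S', ENNReal.ofReal (p a) = ENNReal.ofReal (∑ a ∈ S', p a) :=
    fun S' => (ENNReal.ofReal_sum_of_nonneg fun a _ => hp a).symm
  have hw : HasSum w 1 := by
    rw [ENNReal.summable.hasSum_iff, ENNReal.tsum_add, tsum_ite_eq, ← sum_eq_tsum_indicator, hS,
      ← hs, ← ENNReal.ofReal_add (Finset.sum_nonneg fun a _ => hp a) (by linarith)]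
    simp [← hs]
  let μ : PMF α := ⟨w, hw⟩
  have hμ : ⇑μ = w := rfl
  refine ⟨μ, fun a ha => ?_, fun q => ?_⟩
  · by_cases haS : a ∈ S
    · exact hP a haS
    · by_cases h : a = a₀
      · exact h ▸ ha₀
      · exact absurd (show w a = 0 by simp [w, haS, h]) ha
  · rw [PMF.toOuterMeasure_apply, hμ]
    set S' := S.filter fun a => ¬ good q a with hS'
    calc ∑' a, {a | ¬ good q a}.indicator w a
        ≤ ∑' a, ((S' : Set α).indicator (fun a => ENNReal.ofReal (p a)) a +
            if a = a₀ then ENNReal.ofReal (1 - s) else 0) := by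
          refine ENNReal.tsum_le_tsum fun a => ?_
          by_cases hg : good q a
          · simp [hg]
          · rw [Set.indicator_of_mem (show a ∈ {a | ¬ good q a} from hg)]
            simp only [w, hS', Finset.coe_filter, Set.indicator_apply, Set.mem_ofPred_eq, hg,
              not_false_eq_true, and_true, Finset.mem_coe]
            exact le_rfl
      _ = ENNReal.ofReal (∑ a ∈ S', p a + (1 - s)) := by
          rw [ENNReal.tsum_add, tsum_ite_eq, ← sum_eq_tsum_indicator, hS,
            ← ENNReal.ofReal_add (Finset.sum_nonneg fun a _ => hp a) (by linarith)]
      _ ≤ ENNReal.ofReal δ := ENNReal.ofReal_le_ofReal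
          (hδ q S' (Finset.filter_subset _ _) fun a ha => (Finset.mem_filter.1 ha).2)

end RandomlyGood

theorem randomlyGood_halving {ι E : Type*} [DecidableEq ι] [NormedAddCommGroup E]
    [InnerProductSpace ℝ E] (x : ι → E) (hx : ∀ i, ‖x i‖ ≤ 1) (c : ℝ) (hc : 1 ≤ c) (A : Finset ι) :
    RandomlyGood (fun B : Finset ι => B ⊆ A ∧ 2 * B.card ≤ A.card)
      (fun (u : Metric.closedBall (0 : E) 1) B => |⟪signedSum x A B, (u : E)⟫| ≤ c)
      (ENNReal.ofReal (2 * (A.card + 1) * Real.exp (-c / 2))) := by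
  obtain ⟨p, hp0, hp1, hpA, hpu⟩ := exists_selfBalancing_weights x hx c hc A
  have hsigned : RandomlyGood (fun B : Finset ι => B ⊆ A)
      (fun (u : Metric.closedBall (0 : E) 1) B => |⟪signedSum x A B, (u : E)⟫| ≤ c)
      (ENNReal.ofReal (2 * (A.card + 1) * Real.exp (-c / 2))) := by
    refine RandomlyGood.of_weights (a₀ := ∅) p hp0 hp1 (fun B => Finset.mem_powerset.1)
      (Finset.empty_subset A) fun ⟨u, hu⟩ S' hS' hbad => ?_
    have hu1 : ‖u‖ ≤ 1 := by simpa using hu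
    have htail : ∀ u : E, ‖u‖ ≤ 1 →
        ∑ B ∈ A.powerset, p B * Real.exp ⟪signedSum x A B, u⟫ ≤ Real.exp (c / 2) := by
      intro u hu
      refine (hpu u).trans (Real.exp_le_exp.2 ?_)
      nlinarith [norm_nonneg u, mul_le_mul hu hu (norm_nonneg u) zero_le_one]
    have h1 : ∑ B ∈ S', p B ≤ ∑ B ∈ A.powerset, Real.exp (-c) *
        (p B * Real.exp ⟪signedSum x A B, u⟫ + p B * Real.exp ⟪signedSum x A B, -u⟫) := by
      refine (Finset.sum_le_sum fun B hB => ?_).trans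
        (Finset.sum_le_sum_of_subset_of_nonneg hS' fun B _ _ => ?_)
      · have hrw : Real.exp (-c) *
            (p B * Real.exp ⟪signedSum x A B, u⟫ + p B * Real.exp ⟪signedSum x A B, -u⟫) =
            p B * (Real.exp (⟪signedSum x A B, u⟫ - c) + Real.exp (-⟪signedSum x A B, u⟫ - c)) := by
          simp only [inner_neg_right, sub_eq_add_neg, Real.exp_add]; ring
        rw [hrw]
        refine le_mul_of_one_le_right (hp0 B) ?_
        rcases lt_abs.1 (not_le.1 (hbad B hB)) with h | h
        · linarith [Real.one_le_exp (sub_nonneg.2 h.le),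
            Real.exp_pos (-⟪signedSum x A B, u⟫ - c)]
        · linarith [Real.one_le_exp (sub_nonneg.2 h.le),
            Real.exp_pos (⟪signedSum x A B, u⟫ - c)]
      · have := hp0 B
        positivity
    rw [← Finset.mul_sum, Finset.sum_add_distrib] at h1
    have h2 := htail u hu1
    have h3 := htail (-u) (by simpa using hu1)
    have h4 := mul_le_mul_of_nonneg_left (add_le_add h2 h3) (Real.exp_pos (-c)).le
    have h5 : Real.exp (-c) * (Real.exp (c / 2) + Real.exp (c / 2)) = 2 * Real.exp (-c / 2) := by
      rw [← two_mul, mul_left_comm, ← Real.exp_add]; ring_nf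
    linarith
  refine hsigned.map (fun B => if 2 * B.card ≤ A.card then B else A \ B) (fun B hB => ?_)
    fun u B hB hu => ?_
  · split_ifs with h
    · exact ⟨hB, h⟩
    · refine ⟨Finset.sdiff_subset, ?_⟩
      have := Finset.card_sdiff_add_card_eq_card hB
      omega
  · split_ifs with h
    · exact hu
    · have : signedSum x A (A \ B) = -signedSum x A B := by
        simp only [signedSum, ← Finset.sum_sdiff hB]
        abel
      rwa [this, inner_neg_left, abs_neg]

theorem randomlyGood_iterated_halving {ι E : Type*} [DecidableEq ι] [NormedAddCommGroup E]
    [InnerProductSpace ℝ E] (x : ι → E) (hx : ∀ i, ‖x i‖ ≤ 1) (c : ℝ) (hc : 1 ≤ c) (A : Finset ι)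
    (n : ℕ) (hA : A.card ≤ n) (L : ℕ) :
    RandomlyGood (fun B : Finset ι => B ⊆ A ∧ 2 ^ L * B.card ≤ A.card)
      (fun (u : Metric.closedBall (0 : E) 1) B =>
        |⟪(2 : ℝ) ^ L • ∑ i ∈ B, x i - ∑ i ∈ A, x i, (u : E)⟫| ≤ (2 ^ L - 1) * c)
      (L * ENNReal.ofReal (2 * (n + 1) * Real.exp (-c / 2))) := by
  induction L with
  | zero => exact RandomlyGood.pure (a := A) (by simp) (by simp)
  | succ L ih =>
    rw [Nat.cast_succ, add_mul, one_mul]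
    have hstep : ∀ B, B ⊆ A ∧ 2 ^ L * B.card ≤ A.card →
        RandomlyGood (fun B' : Finset ι => B' ⊆ B ∧ 2 * B'.card ≤ B.card)
          (fun (u : Metric.closedBall (0 : E) 1) B' => |⟪signedSum x B B', (u : E)⟫| ≤ c)
          (ENNReal.ofReal (2 * (n + 1) * Real.exp (-c / 2))) := by
      intro B hB
      refine (randomlyGood_halving x hx c hc B).mono (fun _ h => h) id (fun _ _ _ h => h)
        (ENNReal.ofReal_le_ofReal ?_)
      have : (B.card : ℝ) ≤ n := by exact_mod_cast (Finset.card_le_card hB.1).trans hA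
      gcongr
    refine ih.bind (fun _ B' => B') hstep ?_ ?_
    · rintro B B' ⟨hBA, hB⟩ ⟨hB'B, hB'⟩
      refine ⟨hB'B.trans hBA, ?_⟩
      calc 2 ^ (L + 1) * B'.card = 2 ^ L * (2 * B'.card) := by ring
        _ ≤ 2 ^ L * B.card := by gcongr
        _ ≤ _ := hB
    · intro u B B' _ _ h h'
      have e : (2 : ℝ) ^ (L + 1) • ∑ i ∈ B', x i - ∑ i ∈ A, x i =
          (2 : ℝ) ^ L • signedSum x B B' + ((2 : ℝ) ^ L • ∑ i ∈ B, x i - ∑ i ∈ A, x i) := by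
        simp only [signedSum, smul_sub, two_smul, pow_succ, mul_two, add_smul, smul_add]
        abel
      rw [e, inner_add_left, real_inner_smul_left]
      refine (abs_add_le _ _).trans ?_
      rw [abs_mul, abs_of_pos (by positivity : (0 : ℝ) < 2 ^ L)]
      have := mul_le_mul_of_nonneg_left h' (by positivity : (0 : ℝ) ≤ 2 ^ L)
      rw [pow_succ]
      linarith

theorem EuclideanSpace.norm_le_sqrt_mul_of_forall_abs_le {d : ℕ} (w : EuclideanSpace ℝ (Fin d))
    (b : ℝ) (h : ∀ j, |w j| ≤ b) (hb : 0 ≤ b) : ‖w‖ ≤ Real.sqrt d * b := by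
  rw [EuclideanSpace.norm_eq]
  refine Real.sqrt_le_iff.2 ⟨by positivity, ?_⟩
  rw [mul_pow, Real.sq_sqrt (by positivity)]
  refine (Finset.sum_le_card_nsmul _ _ (b ^ 2) fun j _ => ?_).trans (by simp)
  rw [Real.norm_eq_abs]
  exact pow_le_pow_left₀ (abs_nonneg _) (h j) 2

theorem randomlyGood_vector_halving {ι H : Type*} [DecidableEq ι] [NormedAddCommGroup H]
    [InnerProductSpace ℝ H] {d : ℕ} (y : ι → H) (v : ι → EuclideanSpace ℝ (Fin d)) (R M c : ℝ)
    (hR : 0 < R) (hM : 0 ≤ M) (hc : 1 ≤ c) (hy : ∀ i, ‖y i‖ ≤ R) (A : Finset ι)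
    (hv : ∀ i ∈ A, ‖v i‖ ≤ M) (n : ℕ) (hA : A.card ≤ n) (L : ℕ) :
    RandomlyGood (fun B : Finset ι => B ⊆ A ∧ 2 ^ L * B.card ≤ A.card)
      (fun (u : Metric.closedBall (0 : H) R) B =>
        ‖(2 : ℝ) ^ L • ∑ i ∈ B, ⟪y i, (u : H)⟫ • v i - ∑ i ∈ A, ⟪y i, (u : H)⟫ • v i‖ ≤
          Real.sqrt d * (R ^ 2 * (M * ((2 ^ L - 1) * c))))
      (d * (L * ENNReal.ofReal (2 * (n + 1) * Real.exp (-c / 2)))) := by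
  let x : ι → PiLp 2 (fun _ : Fin d => H) := fun i =>
    if i ∈ A then WithLp.toLp 2 (fun j => (v i j / (M * R)) • y i) else 0
  have hx : ∀ i, ‖x i‖ ≤ 1 := by
    intro i
    by_cases hi : i ∈ A
    · have hsq : ‖x i‖ ^ 2 = (‖v i‖ * ‖y i‖ / (M * R)) ^ 2 := by
        simp only [x, hi, if_true]
        rw [PiLp.norm_sq_eq_of_L2]
        simp only [norm_smul, mul_pow, div_pow, Real.norm_eq_abs, sq_abs, abs_div]
        rw [EuclideanSpace.norm_sq_eq, ← Finset.sum_mul, ← Finset.sum_div]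
        simp only [Real.norm_eq_abs, sq_abs]
        ring
      rw [← sq_le_one_iff₀ (norm_nonneg _), hsq, sq_le_one_iff₀ (by positivity)]
      exact div_le_one_of_le₀ (mul_le_mul (hv i hi) (hy i) (norm_nonneg _) hM) (by positivity)
    · simp [x, hi]
  let e : Metric.closedBall (0 : H) R × Fin d →
      Metric.closedBall (0 : PiLp 2 (fun _ : Fin d => H)) 1 := fun q =>
    ⟨PiLp.single 2 q.2 (R⁻¹ • (q.1 : H)), by
      have := q.1.2
      rw [mem_closedBall_zero_iff] at this ⊢
      rw [PiLp.norm_single, norm_smul, norm_inv, Real.norm_of_nonneg hR.le, inv_mul_le_one₀ hR]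
      exact this⟩
  have hcoord : ∀ (u : Metric.closedBall (0 : H) R) (j : Fin d), ∀ i ∈ A,
      ⟪y i, (u : H)⟫ * v i j = R ^ 2 * M * ⟪x i, (e (u, j) : PiLp 2 (fun _ : Fin d => H))⟫ := by
    intro u j i hi
    simp only [x, e, hi, if_true, PiLp.inner_apply]
    rw [Finset.sum_eq_single j (fun b _ hb => by simp [hb]) (by simp)]
    simp only [PiLp.single_apply, if_true, real_inner_smul_left, real_inner_smul_right]
    rcases hM.eq_or_lt with h0 | h0
    · have : v i = 0 := by
        have := hv i hi
        rw [← h0] at this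
        simpa using this
      simp [this]
    · field_simp
  refine ((randomlyGood_iterated_halving x hx c hc A n hA L).mono (goal := fun q B =>
      |⟪(2 : ℝ) ^ L • ∑ i ∈ B, x i - ∑ i ∈ A, x i,
        (e q : PiLp 2 (fun _ : Fin d => H))⟫| ≤ (2 ^ L - 1) * c) (fun _ h => h) e
      (fun _ _ _ h => h) le_rfl).forall_fintype.mono (fun _ h => h) id
      (fun u B hB h => ?_) (by simp)
  have h2 : (1 : ℝ) ≤ 2 ^ L := one_le_pow₀ (by norm_num)
  have hnn : 0 ≤ (2 ^ L - 1) * c := mul_nonneg (by linarith) (by linarith)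
  refine EuclideanSpace.norm_le_sqrt_mul_of_forall_abs_le _ _ (fun j => ?_) (by positivity)
  have hj := h j
  have hsum : ((2 : ℝ) ^ L • ∑ i ∈ B, ⟪y i, (u : H)⟫ • v i - ∑ i ∈ A, ⟪y i, (u : H)⟫ • v i) j =
      R ^ 2 * M * ⟪(2 : ℝ) ^ L • ∑ i ∈ B, x i - ∑ i ∈ A, x i,
        (e (u, j) : PiLp 2 (fun _ : Fin d => H))⟫ := by
    simp only [inner_sub_left, real_inner_smul_left, sum_inner, PiLp.sub_apply, PiLp.smul_apply,
      WithLp.ofLp_sum, Finset.sum_apply, smul_eq_mul]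
    rw [Finset.sum_congr rfl (fun i hi => hcoord u j i (hB.1 hi)),
      Finset.sum_congr rfl (hcoord u j), ← Finset.mul_sum, ← Finset.mul_sum]
    ring
  rw [hsum, abs_mul, abs_of_nonneg (by positivity), ← mul_assoc]
  exact mul_le_mul_of_nonneg_left hj (by positivity)

/-- Each index is assigned the largest level `l ≤ T` with `2 ^ l * ‖v i‖ ≤ κ * ‖v‖`, and the indices
of level `l` are halved `l` times. -/
theorem randomlyGood_levels {n d : ℕ} {H : Type*} [NormedAddCommGroup H] [InnerProductSpace ℝ H]
    (y : Fin n → H) (v : Fin n → EuclideanSpace ℝ (Fin d)) (R κ c : ℝ) (hR : 0 < R) (hκ : 0 < κ)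
    (hc : 1 ≤ c) (hy : ∀ i, ‖y i‖ ≤ R) (T : ℕ) (hT : n ≤ 2 ^ T) :
    RandomlyGood
      (fun S : Fin (T + 1) → Finset (Fin n) =>
        (∑ l, ((S l).card : ℝ)) ≤ 2 * T * Real.sqrt n / κ + 1)
      (fun (u : Metric.closedBall (0 : H) R) S =>
        ‖∑ l : Fin (T + 1), (2 : ℝ) ^ (l : ℕ) • ∑ i ∈ S l, ⟪y i, (u : H)⟫ • v i -
            ∑ i, ⟪y i, (u : H)⟫ • v i‖ ≤
          (T + 1) * (Real.sqrt d * (R ^ 2 * (κ * Real.sqrt (∑ i, ‖v i‖ ^ 2) * c))))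
      ((T + 1 : ℕ) * (d * (T * ENNReal.ofReal (2 * (n + 1) * Real.exp (-c / 2))))) := by
  classical
  set F := Real.sqrt (∑ i, ‖v i‖ ^ 2) with hF
  have hF0 : 0 ≤ F := Real.sqrt_nonneg _
  have hFsq : F ^ 2 = ∑ i, ‖v i‖ ^ 2 := Real.sq_sqrt (by positivity)
  have hvF : ∀ i, ‖v i‖ ≤ F := fun i =>
    Real.le_sqrt_of_sq_le (Finset.single_le_sum (f := fun i => ‖v i‖ ^ 2)
      (fun _ _ => by positivity) (Finset.mem_univ i))
  let lev : Fin n → ℕ := fun i => Nat.findGreatest (fun l => 2 ^ l * ‖v i‖ ≤ κ * F) T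
  have hlev : ∀ i, lev i < T + 1 := fun i => Nat.lt_succ_of_le (Nat.findGreatest_le T)
  let C : Fin (T + 1) → Finset (Fin n) := fun l => Finset.univ.filter fun i => lev i = l
  let M : Fin (T + 1) → ℝ := fun l => if (l : ℕ) = 0 then F else κ * F / 2 ^ (l : ℕ)
  have hM0 : ∀ l, 0 ≤ M l := fun l => by
    simp only [M]; split_ifs <;> positivity
  have hCn : ∀ l, (C l).card ≤ n := fun l => by simpa using (C l).card_le_univ
  have hvM : ∀ l, ∀ i ∈ C l, ‖v i‖ ≤ M l := by
    intro l i hi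
    have hil : lev i = l := (Finset.mem_filter.1 hi).2
    by_cases h : (l : ℕ) = 0
    · simp only [M, h, if_true]
      exact hvF i
    · have := Nat.findGreatest_of_ne_zero hil h
      simp only [M, h, if_false]
      rw [le_div_iff₀ (by positivity), mul_comm]
      exact this
  have hmerr : ∀ l, M l * ((2 ^ (l : ℕ) - 1) * c) ≤ κ * F * c := by
    intro l
    by_cases h : (l : ℕ) = 0
    · simp only [h, pow_zero, sub_self, zero_mul, mul_zero]
      positivity
    · simp only [M, h, if_false]
      rw [← mul_assoc]
      refine mul_le_mul_of_nonneg_right ?_ (by linarith)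
      rw [div_mul_eq_mul_div, div_le_iff₀ (by positivity)]
      exact mul_le_mul_of_nonneg_left (by linarith) (by positivity)
  have hsize : ∀ (l : Fin (T + 1)) (B : Finset (Fin n)), (l : ℕ) < T → B ⊆ C l →
      2 ^ (l : ℕ) * B.card ≤ (C l).card → (B.card : ℝ) ≤ 2 * Real.sqrt n / κ := by
    intro l B hl hBC hB
    rcases (C l).eq_empty_or_nonempty with h0 | ⟨i₀, hi₀⟩
    · rw [h0, Finset.subset_empty] at hBC
      rw [hBC]
      simp only [Finset.card_empty, Nat.cast_zero]
      positivity
    have hbig : ∀ i ∈ C l, κ * F < 2 ^ ((l : ℕ) + 1) * ‖v i‖ := by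
      intro i hi
      have hil : lev i = l := (Finset.mem_filter.1 hi).2
      exact not_le.1 (Nat.findGreatest_is_greatest (P := fun l => 2 ^ l * ‖v i‖ ≤ κ * F)
        (k := (l : ℕ) + 1) (by change lev i < _; omega) hl)
    have hFpos : 0 < F := by
      refine hF0.lt_of_ne fun h => ?_
      have h1 := hbig i₀ hi₀
      have h2 := hvF i₀
      rw [← h] at h1 h2
      have : ‖v i₀‖ = 0 := le_antisymm h2 (norm_nonneg _)
      simp [this] at h1
    have hcard : ((C l).card : ℝ) * κ ^ 2 ≤ 4 * (2 ^ (l : ℕ)) ^ 2 := by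
      have h1 : ((C l).card : ℝ) * (κ * F) ^ 2 ≤ 4 * (2 ^ (l : ℕ)) ^ 2 * F ^ 2 := by
        rw [hFsq, Finset.mul_sum]
        calc ((C l).card : ℝ) * (κ * F) ^ 2 = ∑ i ∈ C l, (κ * F) ^ 2 := by simp
          _ ≤ ∑ i ∈ C l, 4 * (2 ^ (l : ℕ)) ^ 2 * ‖v i‖ ^ 2 := by
            refine Finset.sum_le_sum fun i hi => ?_
            calc (κ * F) ^ 2 ≤ (2 ^ ((l : ℕ) + 1) * ‖v i‖) ^ 2 :=
                  pow_le_pow_left₀ (by positivity) (hbig i hi).le 2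
              _ = _ := by ring
          _ ≤ _ := Finset.sum_le_sum_of_subset_of_nonneg (Finset.subset_univ _)
              fun _ _ _ => by positivity
      rw [mul_pow, ← mul_assoc] at h1
      exact le_of_mul_le_mul_right h1 (by positivity)
    rw [le_div_iff₀ hκ]
    refine abs_le_of_sq_le_sq' ?_ (by positivity) |>.2
    rw [mul_pow 2, Real.sq_sqrt (by positivity)]
    have hB' : (2 : ℝ) ^ (l : ℕ) * B.card ≤ (C l).card := by exact_mod_cast hB
    have hn : ((C l).card : ℝ) ≤ n := by exact_mod_cast hCn l
    have hpos : (0 : ℝ) < (2 ^ (l : ℕ)) ^ 2 := by positivity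
    refine le_of_mul_le_mul_left ?_ hpos
    calc (2 ^ (l : ℕ)) ^ 2 * ((B.card : ℝ) * κ) ^ 2 = (2 ^ (l : ℕ) * B.card) ^ 2 * κ ^ 2 := by ring
      _ ≤ ((C l).card : ℝ) ^ 2 * κ ^ 2 := by gcongr
      _ = (C l).card * ((C l).card * κ ^ 2) := by ring
      _ ≤ n * (4 * (2 ^ (l : ℕ)) ^ 2) := by gcongr
      _ = _ := by ring
  have hlast : ∀ B : Finset (Fin n), 2 ^ T * B.card ≤ (C (Fin.last T)).card → B.card ≤ 1 := by
    intro B hB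
    have h1 : 2 ^ T * B.card ≤ 2 ^ T * 1 := by
      rw [mul_one]
      exact hB.trans ((hCn _).trans hT)
    exact Nat.le_of_mul_le_mul_left h1 (by positivity)
  have hlevel : ∀ l, RandomlyGood (fun B => B ⊆ C l ∧ 2 ^ (l : ℕ) * B.card ≤ (C l).card)
      (fun (u : Metric.closedBall (0 : H) R) B =>
        ‖(2 : ℝ) ^ (l : ℕ) • ∑ i ∈ B, ⟪y i, (u : H)⟫ • v i - ∑ i ∈ C l, ⟪y i, (u : H)⟫ • v i‖ ≤
          Real.sqrt d * (R ^ 2 * (M l * ((2 ^ (l : ℕ) - 1) * c))))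
      (d * (T * ENNReal.ofReal (2 * (n + 1) * Real.exp (-c / 2)))) := by
    intro l
    refine (randomlyGood_vector_halving y v R (M l) c hR (hM0 l) hc hy (C l) (hvM l) n (hCn l)
      (l : ℕ)).mono (fun _ h => h) id (fun _ _ _ h => h) ?_
    gcongr
    exact Fin.is_le l
  refine (RandomlyGood.pi hlevel).mono ?_ id ?_ (by simp)
  · intro S hS
    rw [Fin.sum_univ_castSucc]
    refine add_le_add ?_ ?_
    · refine (Finset.sum_le_card_nsmul _ _ (2 * Real.sqrt n / κ) fun l _ => ?_).trans (le_of_eq ?_)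
      · exact hsize _ _ (by simp) (hS _).1 (hS _).2
      · simp only [Finset.card_univ, Fintype.card_fin, nsmul_eq_mul]; ring
    · exact_mod_cast hlast _ (hS (Fin.last T)).2
  · intro u S _ h
    have hpart : ∑ i, ⟪y i, (u : H)⟫ • v i = ∑ l, ∑ i ∈ C l, ⟪y i, (u : H)⟫ • v i := by
      rw [← Finset.sum_fiberwise (s := Finset.univ) (g := fun i => (⟨lev i, hlev i⟩ : Fin (T + 1)))]
      refine Finset.sum_congr rfl fun l _ => Finset.sum_congr ?_ fun _ _ => rfl
      ext i
      simp [C, Fin.ext_iff]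
    rw [hpart, ← Finset.sum_sub_distrib]
    refine (norm_sum_le _ _).trans ((Finset.sum_le_card_nsmul _ _ _ fun l _ =>
      (h l).trans ?_).trans (le_of_eq (b := _) (a := (Fintype.card (Fin (T + 1))) •
        (Real.sqrt d * (R ^ 2 * (κ * F * c)))) (by simp)))
    have := hmerr l
    gcongr

theorem norm_ratio_sub_ratio_le {E : Type*} [NormedAddCommGroup E] [NormedSpace ℝ E] (N N' : E)
    (Z Z' W ε : ℝ) (hZ : 0 < Z) (hε0 : 0 ≤ ε) (hε1 : ε ≤ 1) (hN : ‖N‖ ≤ W)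
    (hN' : ‖N' - N‖ ≤ ε / 3 * W) (hZ' : |Z' - Z| ≤ ε / 3 * Z) :
    ‖Z'⁻¹ • N' - Z⁻¹ • N‖ ≤ ε * (W / Z) := by
  have hW : 0 ≤ W := (norm_nonneg N).trans hN
  have hZ'' : 2 / 3 * Z ≤ Z' := by
    have := (abs_le.1 hZ').1
    nlinarith
  have hZ'0 : 0 < Z' := by linarith
  have e : Z'⁻¹ • N' - Z⁻¹ • N = Z'⁻¹ • ((N' - N) - ((Z' - Z) / Z) • N) := by
    rw [smul_sub, smul_sub, smul_smul, sub_sub, ← add_smul]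
    congr 2
    field_simp
    ring
  have h2 : ‖((Z' - Z) / Z) • N‖ ≤ ε / 3 * W := by
    rw [norm_smul, norm_div, Real.norm_eq_abs, Real.norm_of_nonneg hZ.le]
    exact mul_le_mul ((div_le_iff₀ hZ).2 hZ') hN (norm_nonneg _) (by positivity)
  rw [e, norm_smul, norm_inv, Real.norm_of_nonneg hZ'0.le, inv_mul_le_iff₀ hZ'0]
  refine (norm_sub_le _ _).trans ((add_le_add hN' h2).trans ?_)
  have h3 : 2 / 3 * W ≤ Z' * (W / Z) := by
    rw [mul_div_assoc', le_div_iff₀ hZ]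
    nlinarith
  nlinarith

theorem RandomlyGood.exists_pmf_one_sub_le {α Q : Type*} {P : α → Prop} {good : Q → α → Prop}
    {δ : ℝ} (hδ : 0 ≤ δ) (h : RandomlyGood P good (ENNReal.ofReal δ)) :
    ∃ μ : PMF α, (∀ a ∈ μ.support, P a) ∧
      ∀ q, ENNReal.ofReal (1 - δ) ≤ μ.toOuterMeasure {a | good q a} := by
  obtain ⟨μ, hμ, hb⟩ := h
  refine ⟨μ, hμ, fun q => ?_⟩
  have h1 : μ.toOuterMeasure Set.univ = 1 :=
    (PMF.toOuterMeasure_apply_eq_one_iff _ _).2 (Set.subset_univ _)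
  rw [ENNReal.ofReal_sub _ hδ, ENNReal.ofReal_one, ← h1, tsub_le_iff_right]
  refine le_trans ?_ (add_le_add_right (hb q) _)
  refine le_trans (le_of_eq ?_) (MeasureTheory.measure_union_le _ _)
  congr 1
  ext a
  simp [em]

theorem one_le_log_two_add {n : ℕ} (hn : 0 < n) : 1 ≤ Real.log (2 + n) := by
  rw [Real.le_log_iff_exp_le (by positivity)]
  have : (1 : ℝ) ≤ n := by exact_mod_cast hn
  linarith [Real.exp_one_lt_d9]

theorem clog_add_one_le_log {n : ℕ} (hn : 0 < n) :
    (Nat.clog 2 n : ℝ) + 1 ≤ 5 * Real.log (2 + n) := by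
  have h1 : (2 : ℝ) ^ Nat.clog 2 n ≤ 2 * n := by
    rcases (Nat.one_le_iff_ne_zero.2 hn.ne').eq_or_lt with h | h
    · subst h; norm_num
    · have := Nat.pow_pred_clog_lt_self (b := 2) (by norm_num) h
      have hpos : 0 < Nat.clog 2 n := Nat.clog_pos (by norm_num) h
      have h2 : 2 ^ Nat.clog 2 n = 2 * 2 ^ (Nat.clog 2 n).pred := by
        rw [← pow_succ', ← Nat.succ_eq_add_one, Nat.succ_pred_eq_of_pos hpos]
      have h3 : 2 ^ Nat.clog 2 n ≤ 2 * n := by omega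
      exact_mod_cast h3
  have hn1 : (1 : ℝ) ≤ n := by exact_mod_cast hn
  have h2 : (2 : ℝ) ^ (Nat.clog 2 n + 1) ≤ (2 + n) ^ 3 := by
    rw [pow_succ]
    nlinarith [sq_nonneg (n : ℝ)]
  have h3 := Real.log_le_log (by positivity) h2
  rw [Real.log_pow, Real.log_pow] at h3
  push_cast at h3
  have h4 := Real.log_two_gt_d9
  have h5 : (0 : ℝ) ≤ Nat.clog 2 n := by positivity
  nlinarith

theorem two_mul_failure_le {n d T : ℕ} (hn : 0 < n) (hd : d ≤ n ^ 2) (hT : T = Nat.clog 2 n) :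
    ((T + 1 : ℕ) * (d * (T * ENNReal.ofReal
        (2 * (n + 1) * Real.exp (-(20 * Real.log (2 + n)) / 2)))) +
      (T + 1 : ℕ) * (d * (T * ENNReal.ofReal
        (2 * (n + 1) * Real.exp (-(20 * Real.log (2 + n)) / 2)))) : ℝ≥0∞) ≤
      ENNReal.ofReal (1 / (n : ℝ) ^ 2) := by
  have hN : (0 : ℝ) < 2 + n := by positivity
  have hexp : Real.exp (-(20 * Real.log (2 + n)) / 2) = ((2 + n : ℝ) ^ 10)⁻¹ := by
    rw [show -(20 * Real.log (2 + n)) / 2 = -(Real.log ((2 + n : ℝ) ^ 10)) by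
      rw [Real.log_pow]; push_cast; ring, Real.exp_neg, Real.exp_log (by positivity)]
  have hcast : ∀ m : ℕ, (m : ℝ≥0∞) = ENNReal.ofReal m := fun m => (ENNReal.ofReal_natCast m).symm
  rw [hexp, hcast, hcast d, hcast T, ← ENNReal.ofReal_mul (by positivity),
    ← ENNReal.ofReal_mul (by positivity), ← ENNReal.ofReal_mul (by positivity),
    ← ENNReal.ofReal_add (by positivity) (by positivity)]
  refine ENNReal.ofReal_le_ofReal ?_
  have hTn : T ≤ n := hT ▸ Nat.clog_le_of_le_pow (Nat.lt_two_pow_self).le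
  have h1 : ((T + 1 : ℕ) : ℝ) ≤ 2 + n := by
    have : (T : ℝ) ≤ n := by exact_mod_cast hTn
    push_cast; linarith
  have h2 : (T : ℝ) ≤ 2 + n := by push_cast at h1; linarith
  have h3 : (d : ℝ) ≤ (2 + n) ^ 2 := by
    have h : (d : ℝ) ≤ (n : ℝ) ^ 2 := by exact_mod_cast hd
    nlinarith
  have h4 : (n : ℝ) + 1 ≤ 2 + n := by linarith
  have hn0 : (0 : ℝ) < n := by exact_mod_cast hn
  calc _ ≤ (2 + n : ℝ) * ((2 + n) ^ 2 * ((2 + n) * (2 * (2 + n) * ((2 + n : ℝ) ^ 10)⁻¹))) +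
        (2 + n : ℝ) * ((2 + n) ^ 2 * ((2 + n) * (2 * (2 + n) * ((2 + n : ℝ) ^ 10)⁻¹))) := by gcongr
    _ = 4 / (2 + n : ℝ) ^ 5 := by field_simp; ring
    _ ≤ 1 / (n : ℝ) ^ 2 := by
      rw [div_le_div_iff₀ (by positivity) (by positivity)]
      have h5 : (n : ℝ) ^ 2 ≤ (2 + n) ^ 2 := by gcongr; linarith
      have h6 : (4 : ℝ) ≤ (2 + n) ^ 3 := by nlinarith [pow_pos hn0 3, sq_nonneg (n : ℝ)]
      calc 4 * (n : ℝ) ^ 2 ≤ (2 + n) ^ 3 * (2 + n) ^ 2 := by gcongr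
        _ = 1 * (2 + n : ℝ) ^ 5 := by ring

theorem randomlyGood_attention_sums {n d T : ℕ} (hn : 0 < n) (hd : 0 < d)
    (hT : T = Nat.clog 2 n) {r ε : ℝ} (hr : 0 < r) (hε : 0 < ε) (hε1 : ε < 1)
    (k v : Fin n → EuclideanSpace ℝ (Fin d)) (hk : ∀ i, ‖k i‖ ≤ r) :
    RandomlyGood
      (fun S : Fin (T + 1) → Finset (Fin n) => (∑ l, ((S l).card : ℝ)) ≤
        3001 * Real.sqrt d * Real.exp (2 * r ^ 2 / Real.sqrt d) * ε⁻¹ * (Real.log (2 + n)) ^ 4)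
      (fun (q : Metric.closedBall (0 : EuclideanSpace ℝ (Fin d)) r) S =>
        ‖∑ l : Fin (T + 1), (2 : ℝ) ^ (l : ℕ) •
              ∑ i ∈ S l, Real.exp (⟪k i, (q : EuclideanSpace ℝ (Fin d))⟫ / Real.sqrt d) • v i -
            ∑ i, Real.exp (⟪k i, (q : EuclideanSpace ℝ (Fin d))⟫ / Real.sqrt d) • v i‖ ≤
          ε / 3 * (Real.sqrt n * Real.exp (-(r ^ 2 / Real.sqrt d)) *
            Real.sqrt (∑ i, ‖v i‖ ^ 2)))
      ((T + 1 : ℕ) * (d * (T * ENNReal.ofReal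
        (2 * (n + 1) * Real.exp (-(20 * Real.log (2 + n)) / 2))))) := by
  obtain ⟨φ, hφ⟩ := exists_expKernel_features d (Real.sqrt d) (Real.sqrt_nonneg _)
  set D := Real.sqrt d with hD
  have hD1 : 1 ≤ D := Real.one_le_sqrt.2 (by exact_mod_cast hd)
  set s := r ^ 2 / D with hs
  have hs0 : 0 ≤ s := by positivity
  set X := Real.exp s with hX
  have hX1 : 1 ≤ X := Real.one_le_exp hs0
  have hnn : (1 : ℝ) ≤ Real.sqrt n := Real.one_le_sqrt.2 (by exact_mod_cast hn)
  set ℓ := Real.log (2 + n) with hℓ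
  have hℓ1 : 1 ≤ ℓ := one_le_log_two_add hn
  have hTℓ : (T : ℝ) + 1 ≤ 5 * ℓ := hT ▸ clog_add_one_le_log hn
  have hT0 : (0 : ℝ) ≤ T := by positivity
  have hφR : ∀ a, ‖a‖ ≤ r → ‖φ a‖ ≤ Real.sqrt X := by
    intro a ha
    refine Real.le_sqrt_of_sq_le ?_
    rw [← real_inner_self_eq_norm_sq, hφ, real_inner_self_eq_norm_sq]
    refine Real.exp_le_exp.2 ?_
    rw [hs]
    gcongr
  have hX2 : Real.exp (2 * r ^ 2 / D) = X ^ 2 := by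
    rw [hX, ← Real.exp_nat_mul, hs]; congr 1; push_cast; ring
  have hXinv : Real.exp (-s) = X⁻¹ := Real.exp_neg s
  rw [hX2, hXinv]
  set κ := ε * Real.sqrt n / (3 * (T + 1) * D * (20 * ℓ) * X ^ 2) with hκ
  have hκ0 : 0 < κ := by positivity
  refine (randomlyGood_levels (fun i => φ (k i)) v (Real.sqrt X) κ (20 * ℓ) (by positivity) hκ0
    (by linarith) (fun i => hφR _ (hk i)) T (hT ▸ Nat.le_pow_clog (by norm_num) n)).mono ?_
    (fun q => ⟨φ q, by
      have := q.2
      rw [mem_closedBall_zero_iff] at this ⊢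
      exact hφR _ this⟩) ?_ le_rfl
  · intro S hS
    refine hS.trans ?_
    have e1 : 2 * T * Real.sqrt n / κ = 6 * (T * (T + 1)) * D * (20 * ℓ) * X ^ 2 * ε⁻¹ := by
      rw [hκ]; field_simp; ring
    have hεi : 1 ≤ ε⁻¹ := (one_le_inv₀ hε).2 hε1.le
    have e2 : (T : ℝ) * (T + 1) ≤ 25 * ℓ ^ 2 := by nlinarith
    have e3 : 1 ≤ D * X ^ 2 * ε⁻¹ * ℓ ^ 4 :=
      one_le_mul_of_one_le_of_one_le (one_le_mul_of_one_le_of_one_le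
        (one_le_mul_of_one_le_of_one_le hD1 (one_le_pow₀ hX1)) hεi) (one_le_pow₀ hℓ1)
    have e4 : ℓ ^ 3 ≤ ℓ ^ 4 := pow_le_pow_right₀ hℓ1 (by norm_num)
    rw [e1]
    calc 6 * (T * (T + 1)) * D * (20 * ℓ) * X ^ 2 * ε⁻¹ + 1
        ≤ 6 * (25 * ℓ ^ 2) * D * (20 * ℓ) * X ^ 2 * ε⁻¹ + D * X ^ 2 * ε⁻¹ * ℓ ^ 4 := by gcongr
      _ = 3000 * (D * X ^ 2 * ε⁻¹) * ℓ ^ 3 + D * X ^ 2 * ε⁻¹ * ℓ ^ 4 := by ring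
      _ ≤ 3000 * (D * X ^ 2 * ε⁻¹) * ℓ ^ 4 + D * X ^ 2 * ε⁻¹ * ℓ ^ 4 := by gcongr
      _ = _ := by ring
  · intro q S _ h
    simp only [hφ] at h
    refine h.trans (le_of_eq ?_)
    rw [Real.sq_sqrt (by positivity), ← hD, hκ]
    have : (0 : ℝ) < T + 1 := by linarith
    have : 0 < X := by linarith
    have : 0 < D := by linarith
    have : 0 < ℓ := by linarith
    field_simp

theorem sum_div_smul_eq {ι E : Type*} [AddCommGroup E] [Module ℝ E] (s : Finset ι) (e : ι → ℝ)
    (v : ι → E) (Z : ℝ) : ∑ i ∈ s, (e i / Z) • v i = Z⁻¹ • ∑ i ∈ s, e i • v i := by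
  rw [Finset.smul_sum]
  exact Finset.sum_congr rfl fun i _ => by rw [smul_smul, div_eq_inv_mul]

theorem norm_sum_smul_le_sqrt_mul_sqrt {ι E : Type*} [NormedAddCommGroup E] [NormedSpace ℝ E]
    (s : Finset ι) (e : ι → ℝ) (v : ι → E) :
    ‖∑ i ∈ s, e i • v i‖ ≤ Real.sqrt (∑ i ∈ s, e i ^ 2) * Real.sqrt (∑ i ∈ s, ‖v i‖ ^ 2) := by
  refine (norm_sum_le _ _).trans ?_
  simp_rw [norm_smul]
  refine (Real.sum_mul_le_sqrt_mul_sqrt s (fun i => ‖e i‖) fun i => ‖v i‖).trans (le_of_eq ?_)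
  simp

theorem attention_error_le {n d T : ℕ} (hn : 0 < n) {ε m : ℝ} (hε : 0 ≤ ε) (hε1 : ε ≤ 1)
    (hm : 0 < m) (j : Fin d) (e : Fin n → ℝ) (he : ∀ i, m ≤ e i)
    (v : Fin n → EuclideanSpace ℝ (Fin d)) (S S' : Fin (T + 1) → Finset (Fin n))
    (hS : ‖∑ l : Fin (T + 1), (2 : ℝ) ^ (l : ℕ) •
          ∑ i ∈ S l, e i • EuclideanSpace.single j (1 : ℝ) -
        ∑ i, e i • EuclideanSpace.single j (1 : ℝ)‖ ≤
      ε / 3 * (Real.sqrt n * m *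
        Real.sqrt (∑ _i : Fin n, ‖EuclideanSpace.single j (1 : ℝ)‖ ^ 2)))
    (hS' : ‖∑ l : Fin (T + 1), (2 : ℝ) ^ (l : ℕ) • ∑ i ∈ S' l, e i • v i - ∑ i, e i • v i‖ ≤
      ε / 3 * (Real.sqrt n * m * Real.sqrt (∑ i, ‖v i‖ ^ 2))) :
    ‖(∑ l : Fin (T + 1), (2 : ℝ) ^ (l : ℕ) * ∑ i ∈ S l, e i)⁻¹ •
          (∑ l : Fin (T + 1), (2 : ℝ) ^ (l : ℕ) • ∑ i ∈ S' l, e i • v i) -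
        ∑ i, (e i / ∑ j, e j) • v i‖ ≤
      ε * Real.sqrt (∑ i, (e i / ∑ j, e j) ^ 2) * Real.sqrt (∑ i, ‖v i‖ ^ 2) := by
  set F := Real.sqrt (∑ i, ‖v i‖ ^ 2)
  set Z := ∑ i, e i with hZ
  have hnm : n * m ≤ Z := by
    simpa using Finset.card_nsmul_le_sum Finset.univ e m (fun i _ => he i)
  have hn0 : (0 : ℝ) < n := by exact_mod_cast hn
  have hZ0 : 0 < Z := lt_of_lt_of_le (by positivity) hnm
  have hW : Real.sqrt n * m ≤ Real.sqrt (∑ i, e i ^ 2) := by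
    refine Real.le_sqrt_of_sq_le ?_
    rw [mul_pow, Real.sq_sqrt hn0.le]
    simpa using Finset.card_nsmul_le_sum Finset.univ (fun i => e i ^ 2) (m ^ 2)
      (fun i _ => pow_le_pow_left₀ hm.le (he i) 2)
  have hden : |∑ l : Fin (T + 1), (2 : ℝ) ^ (l : ℕ) * ∑ i ∈ S l, e i - Z| ≤ ε / 3 * Z := by
    simp_rw [← Finset.sum_smul, smul_smul] at hS
    rw [← Finset.sum_smul, ← sub_smul, norm_smul, PiLp.norm_single] at hS
    simp only [norm_one, mul_one, one_pow, Finset.sum_const, Finset.card_univ, Fintype.card_fin,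
      nsmul_eq_mul, Real.norm_eq_abs] at hS
    refine hS.trans (mul_le_mul_of_nonneg_left ?_ (by positivity))
    rwa [mul_right_comm, Real.mul_self_sqrt hn0.le]
  have hnum : ‖∑ l : Fin (T + 1), (2 : ℝ) ^ (l : ℕ) • ∑ i ∈ S' l, e i • v i - ∑ i, e i • v i‖ ≤
      ε / 3 * (Real.sqrt (∑ i, e i ^ 2) * F) := by
    refine hS'.trans ?_
    gcongr
  have h := norm_ratio_sub_ratio_le _ _ Z _ _ ε hZ0 hε hε1
    (norm_sum_smul_le_sqrt_mul_sqrt Finset.univ e v) hnum hden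
  rw [sum_div_smul_eq]
  refine h.trans (le_of_eq ?_)
  have : Real.sqrt (∑ i, (e i / Z) ^ 2) = Real.sqrt (∑ i, e i ^ 2) / Z := by
    simp_rw [div_pow]
    rw [← Finset.sum_div, Real.sqrt_div (by positivity), Real.sqrt_sq hZ0.le]
  rw [this]
  ring

/-- BalanceKV guarantee (Theorem 3.1) at the end of the stream: there is an absolute constant
`c > 0` such that for keys `k_i ∈ ℝ^d` with `‖k_i‖ ≤ r`, values `v_i ∈ ℝ^d`, `ε ∈ (0,1)` and
`T = ⌈log₂ n⌉`, there is a query-oblivious (finitely supported) distribution over pairs of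
tuples `((K^0,…,K^T), (V^0,…,V^T))` of subsets of `[n]` of total size at most
`c √d e^{2r²/√d} ε⁻¹ (log(2+n))⁴`, such that for every query `q` with `‖q‖ ≤ r`, with
probability at least `1 − 1/n²`, the estimator
`z = (∑_l 2^l ∑_{i∈V^l} e^{⟨k_i,q⟩/√d} v_i) / (∑_l 2^l ∑_{i∈K^l} e^{⟨k_i,q⟩/√d})`
satisfies `‖z − Attn(q,K,V)‖ ≤ ε ‖softmax(Kq/√d)‖₂ ‖V‖_F`. -/
theorem stmt_13 :
    ∃ c : ℝ, 0 < c ∧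
      ∀ (n d : ℕ), 0 < n → 0 < d →
        ∀ (r ε : ℝ), 0 < r → 0 < ε → ε < 1 →
          ∀ (k v : Fin n → EuclideanSpace ℝ (Fin d)), (∀ i, ‖k i‖ ≤ r) →
            ∀ T : ℕ, T = Nat.clog 2 n →
              ∃ μ : PMF ((Fin (T + 1) → Finset (Fin n)) × (Fin (T + 1) → Finset (Fin n))),
                (∀ p ∈ μ.support,
                    ((∑ l : Fin (T + 1), ((p.1 l).card + (p.2 l).card) : ℕ) : ℝ)
                      ≤ c * Real.sqrt d * Real.exp (2 * r ^ 2 / Real.sqrt d) * ε⁻¹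
                          * (Real.log (2 + n)) ^ 4) ∧
                ∀ q : EuclideanSpace ℝ (Fin d), ‖q‖ ≤ r →
                  ENNReal.ofReal (1 - 1 / (n : ℝ) ^ 2) ≤
                    μ.toOuterMeasure {p :
                        (Fin (T + 1) → Finset (Fin n)) × (Fin (T + 1) → Finset (Fin n)) |
                      ‖(∑ l : Fin (T + 1), (2 : ℝ) ^ (l : ℕ) *
                            ∑ i ∈ p.1 l, Real.exp (⟪k i, q⟫ / Real.sqrt d))⁻¹ •
                          (∑ l : Fin (T + 1), (2 : ℝ) ^ (l : ℕ) •
                            ∑ i ∈ p.2 l, Real.exp (⟪k i, q⟫ / Real.sqrt d) • v i)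
                        - ∑ i : Fin n,
                            (Real.exp (⟪k i, q⟫ / Real.sqrt d)
                              / ∑ j : Fin n, Real.exp (⟪k j, q⟫ / Real.sqrt d)) • v i‖
                      ≤ ε * Real.sqrt (∑ i : Fin n,
                            (Real.exp (⟪k i, q⟫ / Real.sqrt d)
                              / ∑ j : Fin n, Real.exp (⟪k j, q⟫ / Real.sqrt d)) ^ 2)
                          * Real.sqrt (∑ i : Fin n, ‖v i‖ ^ 2)} := by
  refine ⟨6002, by norm_num, fun n d hn hd r ε hr hε hε1 k v hk T hT => ?_⟩
  suffices H : RandomlyGood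
      (fun p : (Fin (T + 1) → Finset (Fin n)) × (Fin (T + 1) → Finset (Fin n)) =>
        ((∑ l : Fin (T + 1), ((p.1 l).card + (p.2 l).card) : ℕ) : ℝ)
          ≤ 6002 * Real.sqrt d * Real.exp (2 * r ^ 2 / Real.sqrt d) * ε⁻¹
            * (Real.log (2 + n)) ^ 4)
      (fun (q : Metric.closedBall (0 : EuclideanSpace ℝ (Fin d)) r) p =>
        ‖(∑ l : Fin (T + 1), (2 : ℝ) ^ (l : ℕ) *
              ∑ i ∈ p.1 l, Real.exp (⟪k i, (q : EuclideanSpace ℝ (Fin d))⟫ / Real.sqrt d))⁻¹ •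
            (∑ l : Fin (T + 1), (2 : ℝ) ^ (l : ℕ) •
              ∑ i ∈ p.2 l,
                Real.exp (⟪k i, (q : EuclideanSpace ℝ (Fin d))⟫ / Real.sqrt d) • v i)
          - ∑ i : Fin n,
              (Real.exp (⟪k i, (q : EuclideanSpace ℝ (Fin d))⟫ / Real.sqrt d)
                / ∑ j : Fin n,
                  Real.exp (⟪k j, (q : EuclideanSpace ℝ (Fin d))⟫ / Real.sqrt d)) • v i‖
        ≤ ε * Real.sqrt (∑ i : Fin n,
              (Real.exp (⟪k i, (q : EuclideanSpace ℝ (Fin d))⟫ / Real.sqrt d)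
                / ∑ j : Fin n,
                  Real.exp (⟪k j, (q : EuclideanSpace ℝ (Fin d))⟫ / Real.sqrt d)) ^ 2)
            * Real.sqrt (∑ i : Fin n, ‖v i‖ ^ 2))
      (ENNReal.ofReal (1 / (n : ℝ) ^ 2)) by
    obtain ⟨μ, hμ, hq⟩ := H.exists_pmf_one_sub_le (by positivity)
    exact ⟨μ, hμ, fun q hqr => hq ⟨q, by simpa using hqr⟩⟩
  have hD1 : 1 ≤ Real.sqrt d := Real.one_le_sqrt.2 (by exact_mod_cast hd)
  rcases le_or_gt d (n ^ 2) with hdn | hdn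
  · let j : Fin d := ⟨0, hd⟩
    refine RandomlyGood.of_le ?_ (two_mul_failure_le hn hdn hT)
    refine (randomlyGood_attention_sums hn hd hT hr hε hε1 k
      (fun _ => EuclideanSpace.single j (1 : ℝ)) hk).bind Prod.mk
      (fun _ _ => randomlyGood_attention_sums hn hd hT hr hε hε1 k v hk) ?_ ?_
    · intro S S' hS hS'
      push_cast
      rw [Finset.sum_add_distrib]
      linarith
    · intro q S S' _ _ hS hS'
      refine attention_error_le hn hε.le hε1.le (Real.exp_pos _) j _ (fun i => ?_) v S S' hS hS'
      refine Real.exp_le_exp.2 ?_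
      rw [← neg_div]
      have hq : ‖(q : EuclideanSpace ℝ (Fin d))‖ ≤ r := mem_closedBall_zero_iff.1 q.2
      have h1 := (abs_le.1 (abs_real_inner_le_norm (k i) (q : EuclideanSpace ℝ (Fin d)))).1
      have h2 := mul_le_mul (hk i) hq (norm_nonneg _) hr.le
      gcongr
      linarith [sq r]
  · let S : Fin (T + 1) → Finset (Fin n) := fun l => if l = 0 then Finset.univ else ∅
    refine RandomlyGood.pure (a := (S, S)) ?_ fun q => ?_
    · have hcard : ((∑ l : Fin (T + 1), ((S l).card + (S l).card) : ℕ) : ℝ) = 2 * n := by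
        rw [Fin.sum_univ_succ]
        simp [S, Fin.succ_ne_zero]
        ring
      have hnD : (n : ℝ) ≤ Real.sqrt d := by
        refine Real.le_sqrt_of_sq_le ?_
        exact_mod_cast hdn.le
      have hX1 : 1 ≤ Real.exp (2 * r ^ 2 / Real.sqrt d) := Real.one_le_exp (by positivity)
      have hεi : 1 ≤ ε⁻¹ := (one_le_inv₀ hε).2 hε1.le
      have hprod : 1 ≤ Real.exp (2 * r ^ 2 / Real.sqrt d) * ε⁻¹ * (Real.log (2 + n)) ^ 4 :=
        one_le_mul_of_one_le_of_one_le (one_le_mul_of_one_le_of_one_le hX1 hεi)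
          (one_le_pow₀ (one_le_log_two_add hn))
      rw [hcard]
      calc (2 : ℝ) * n ≤ 6002 * Real.sqrt d * 1 := by linarith
        _ ≤ 6002 * Real.sqrt d *
            (Real.exp (2 * r ^ 2 / Real.sqrt d) * ε⁻¹ * (Real.log (2 + n)) ^ 4) := by gcongr
        _ = _ := by ring
    · rw [sum_div_smul_eq]
      simp only [S, Fin.sum_univ_succ, Fin.succ_ne_zero, if_true, if_false, Finset.sum_empty,
        mul_zero, smul_zero, Finset.sum_const_zero, add_zero, Fin.val_zero, pow_zero, one_mul,
        one_smul, sub_self, norm_zero]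
      positivity
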